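/- arXiv:1403.1468 — 2 statements merged into one kernel-verified Lean document; each statement's English description precedes it below -/
import Mathlib

section
/- Let G be a finite simple graph on at least one vertex that is regular of even degree d > 0. Then S_max*(G) = (d+2)/2, where S_max*(G) is the minimum over all edge-decompositions of G into stars of the maximum storage of a vertex. -/
open Classical

noncomputable section

variable {V : Type*}

/-- An edge-decomposition of `G` into stars: a finite collection of stars, each given by
a designated centre together with a nonempty set of edges of `G` all incident with the
centre, such that the edge sets are pairwise disjoint and cover the edge set of `G`. -/
structure StarDecomposition (G : SimpleGraph V) where
  stars : Finset (V × Finset (Sym2 V))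
  star_nonempty : ∀ p ∈ stars, p.2.Nonempty
  centre_mem : ∀ p ∈ stars, ∀ e ∈ p.2, p.1 ∈ e
  edges_sub : ∀ p ∈ stars, ∀ e ∈ p.2, e ∈ G.edgeSet
  disj : ∀ p ∈ stars, ∀ q ∈ stars, p ≠ q → Disjoint p.2 q.2
  covers : ∀ e ∈ G.edgeSet, ∃ p ∈ stars, e ∈ p.2

namespace StarDecomposition

variable {G : SimpleGraph V}

/-- The storage of a vertex `u`: the number of stars of the decomposition that contain
`u` as a vertex (as centre or leaf). -/
def storage (D : StarDecomposition G) (u : V) : ℕ :=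
  (D.stars.filter fun p => ∃ e ∈ p.2, u ∈ e).card

/-- The number of stars of the decomposition in which `u` is a leaf
(a vertex other than the centre). -/
def leafCount (D : StarDecomposition G) (u : V) : ℕ :=
  (D.stars.filter fun p => u ≠ p.1 ∧ ∃ e ∈ p.2, u ∈ e).card

/-- The total storage of a decomposition: the sum of the storages of all vertices. -/
def totalStorage [Fintype V] (D : StarDecomposition G) : ℕ :=
  ∑ u, D.storage u

end StarDecomposition

/-- `S*(G)`: the minimum total storage over all edge-decompositions of `G` into stars. -/
def SStar [Fintype V] (G : SimpleGraph V) : ℕ :=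
  sInf {S | ∃ D : StarDecomposition G, D.totalStorage = S}

/-- `S_max*(G)`: the minimum, over all edge-decompositions of `G` into stars, of the
maximum storage of a vertex. -/
def SmaxStar (G : SimpleGraph V) : ℕ :=
  sInf {k | ∃ D : StarDecomposition G, ∀ v, D.storage v ≤ k}

/-- The minimum number of stars over all edge-decompositions of `G` into stars. -/
def minStars (G : SimpleGraph V) : ℕ :=
  sInf {k | ∃ D : StarDecomposition G, D.stars.card = k}

/-- An orientation of `G`: each edge is assigned a head (one of its two endpoints);
the other endpoint is its tail. -/
structure EdgeOrientation (G : SimpleGraph V) where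
  head : Sym2 V → V
  head_mem : ∀ e ∈ G.edgeSet, head e ∈ e

namespace EdgeOrientation

variable {G : SimpleGraph V}

/-- The indegree of `v`: the number of edges whose head is `v`. -/
def indeg (o : EdgeOrientation G) (v : V) : ℕ :=
  {e | e ∈ G.edgeSet ∧ o.head e = v}.ncard

/-- The outdegree of `v`: the number of edges incident with `v` whose head is not `v`. -/
def outdeg (o : EdgeOrientation G) (v : V) : ℕ :=
  {e | e ∈ G.edgeSet ∧ v ∈ e ∧ o.head e ≠ v}.ncard

end EdgeOrientation

/-- `MMI(G)`: the minimum over all orientations of `G` of the maximum indegree. -/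
def MMI (G : SimpleGraph V) : ℕ :=
  sInf {k | ∃ o : EdgeOrientation G, ∀ v, o.indeg v ≤ k}

/-- `MMO(G)`: the minimum over all orientations of `G` of the maximum outdegree. -/
def MMO (G : SimpleGraph V) : ℕ :=
  sInf {k | ∃ o : EdgeOrientation G, ∀ v, o.outdeg v ≤ k}

/-- The independence number `α(G)`: the maximum size of a set of vertices no two of
which are adjacent. -/
def indepNum (G : SimpleGraph V) : ℕ :=
  sSup {k | ∃ s : Finset V, (∀ u ∈ s, ∀ v ∈ s, ¬ G.Adj u v) ∧ s.card = k}

end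

/-!
Counting pairs (star, vertex of that star) gives `∑ storage = |E| + #stars`, since a star with `t`
edges has `t + 1` vertices. Hence `S_max*(G) · |V| > |E|` as soon as `G` has an edge, and
`|E| = (d / 2) |V|` for a `d`-regular graph. Conversely, the out-edges of each vertex in an
orientation form a star, and a vertex then lies in its own star and in at most one star per
incoming edge. Hall's theorem provides an orientation with all indegrees at most `d / 2`: every
edge picks one of `d / 2` slots at one of its endpoints.
-/

noncomputable section

open Finset

variable {V : Type*} {G : SimpleGraph V}

theorem card_biUnion_toFinset_of_forall_mem {c : V} {s : Finset (Sym2 V)} (hs : s.Nonempty)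
    (hc : ∀ e ∈ s, c ∈ e) (hloop : ∀ e ∈ s, ¬ e.IsDiag) :
    #(s.biUnion Sym2.toFinset) = #s + 1 := by
  have hcentre : c ∈ s.biUnion Sym2.toFinset := by
    obtain ⟨e, he⟩ := hs
    exact mem_biUnion.2 ⟨e, he, Sym2.mem_toFinset.2 (hc e he)⟩
  have himage : ((s.biUnion Sym2.toFinset).erase c).image (fun v ↦ s(c, v)) = s := by
    ext e
    simp only [mem_image, mem_erase, mem_biUnion, Sym2.mem_toFinset]
    constructor
    · rintro ⟨v, ⟨hvc, e, he, hve⟩, rfl⟩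
      rwa [← (Sym2.mem_and_mem_iff hvc.symm).1 ⟨hc e he, hve⟩]
    · intro he
      obtain ⟨v, rfl⟩ := hc e he
      exact ⟨v, ⟨fun hvc ↦ hloop _ he hvc.symm, _, he, Sym2.mem_mk_right c v⟩, rfl⟩
  rw [← card_erase_add_one hcentre]
  nth_rw 2 [← himage]
  rw [card_image_of_injective _ fun _ _ ↦ Sym2.congr_right.1]

namespace StarDecomposition

theorem sum_card_edges [Fintype G.edgeSet] (D : StarDecomposition G) :
    ∑ p ∈ D.stars, #p.2 = #G.edgeFinset := by
  rw [← card_biUnion D.disj]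
  congr 1
  ext e
  rw [mem_biUnion, SimpleGraph.mem_edgeFinset]
  exact ⟨fun ⟨p, hp, he⟩ ↦ D.edges_sub p hp e he, D.covers e⟩

theorem totalStorage_eq [Fintype V] [Fintype G.edgeSet] (D : StarDecomposition G) :
    D.totalStorage = #G.edgeFinset + #D.stars :=
  calc ∑ u, D.storage u
    _ = ∑ p ∈ D.stars, #{u | ∃ e ∈ p.2, u ∈ e} :=
      sum_card_bipartiteAbove_eq_sum_card_bipartiteBelow _
    _ = ∑ p ∈ D.stars, #(p.2.biUnion Sym2.toFinset) :=
      sum_congr rfl fun p _ ↦ congrArg card (by ext; simp)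
    _ = ∑ p ∈ D.stars, (#p.2 + 1) :=
      sum_congr rfl fun p hp ↦ card_biUnion_toFinset_of_forall_mem (D.star_nonempty p hp)
        (D.centre_mem p hp) fun e he ↦ G.not_isDiag_of_mem_edgeSet (D.edges_sub p hp e he)
    _ = #G.edgeFinset + #D.stars := by
      rw [sum_add_distrib, D.sum_card_edges, sum_const, smul_eq_mul, mul_one]

end StarDecomposition

theorem exists_injective_endpoint_slot {E : Set (Sym2 V)} {k : ℕ}
    (hk : ∀ S : Finset (Sym2 V), ↑S ⊆ E → #S ≤ #(S.biUnion Sym2.toFinset) * k) :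
    ∃ slot : E → V × Fin k, slot.Injective ∧ ∀ e : E, (slot e).1 ∈ (e : Sym2 V) := by
  have hall (S : Finset E) :
      #S ≤ #(S.biUnion fun e ↦ (e : Sym2 V).toFinset ×ˢ (univ : Finset (Fin k))) := by
    have hslots : S.biUnion (fun e ↦ (e : Sym2 V).toFinset ×ˢ (univ : Finset (Fin k))) =
        ((S.map (.subtype _)).biUnion Sym2.toFinset) ×ˢ univ := by
      ext
      simp
    rw [hslots, card_product, card_fin, ← card_map (.subtype _)]
    exact hk _ (by simp)
  obtain ⟨slot, hinj, hslot⟩ := (all_card_le_biUnion_card_iff_exists_injective _).1 hall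
  exact ⟨slot, hinj, fun e ↦ Sym2.mem_toFinset.1 (mem_product.1 (hslot e)).1⟩

namespace EdgeOrientation

/-- The endpoint of the edge `e` other than its head. On elements of `Sym2 V` that do not contain
their assigned head, which are never edges, it takes the head as a dummy value. -/
def tail (o : EdgeOrientation G) (e : Sym2 V) : V :=
  if h : o.head e ∈ e then Sym2.Mem.other h else o.head e

theorem mk_head_tail (o : EdgeOrientation G) {e : Sym2 V} (he : e ∈ G.edgeSet) :
    s(o.head e, o.tail e) = e := by
  rw [tail, dif_pos (o.head_mem e he), Sym2.other_spec]

theorem tail_mem (o : EdgeOrientation G) {e : Sym2 V} (he : e ∈ G.edgeSet) : o.tail e ∈ e := by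
  have htail := Sym2.mem_mk_right (o.head e) (o.tail e)
  rwa [o.mk_head_tail he] at htail

theorem eq_head_or_eq_tail (o : EdgeOrientation G) {e : Sym2 V} (he : e ∈ G.edgeSet) {v : V}
    (hv : v ∈ e) : v = o.head e ∨ v = o.tail e := by
  rwa [← Sym2.mem_iff, o.mk_head_tail he]

section FiniteEdgeSet

variable [Fintype G.edgeSet] (o : EdgeOrientation G)

/-- The star of all edges with tail `c`, as a pair (centre, edge set). The edge set may be
empty. -/
def outStar (c : V) : V × Finset (Sym2 V) :=
  (c, {e ∈ G.edgeFinset | o.tail e = c})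

theorem mem_outStar {c : V} {e : Sym2 V} :
    e ∈ (o.outStar c).2 ↔ e ∈ G.edgeSet ∧ o.tail e = c := by
  rw [outStar, mem_filter, SimpleGraph.mem_edgeFinset]

/-- The decomposition of `G` into the nonempty out-stars of an orientation. The stars are indexed
by edges rather than vertices, so that only those with an edge occur. -/
def starDecomposition : StarDecomposition G where
  stars := G.edgeFinset.image fun e ↦ o.outStar (o.tail e)
  star_nonempty := forall_mem_image.2 fun e he ↦
    ⟨e, o.mem_outStar.2 ⟨SimpleGraph.mem_edgeFinset.1 he, rfl⟩⟩
  centre_mem := forall_mem_image.2 fun _ _ e he ↦ by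
    obtain ⟨heG, htail⟩ := o.mem_outStar.1 he
    exact htail ▸ o.tail_mem heG
  edges_sub := forall_mem_image.2 fun _ _ _ he ↦ (o.mem_outStar.1 he).1
  disj := forall_mem_image.2 fun _ _ ↦ forall_mem_image.2 fun _ _ hne ↦
    disjoint_left.2 fun _ he he' ↦
      hne (congrArg o.outStar ((o.mem_outStar.1 he).2.symm.trans (o.mem_outStar.1 he').2))
  covers e he :=
    ⟨_, mem_image_of_mem _ (SimpleGraph.mem_edgeFinset.2 he), o.mem_outStar.2 ⟨he, rfl⟩⟩

theorem indeg_eq_card (v : V) : o.indeg v = #{e ∈ G.edgeFinset | o.head e = v} := by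
  rw [indeg, ← Set.ncard_coe_finset]
  simp

theorem storage_starDecomposition_le (v : V) :
    o.starDecomposition.storage v ≤ o.indeg v + 1 := by
  have hsub : {p ∈ o.starDecomposition.stars | ∃ e ∈ p.2, v ∈ e} ⊆
      insert (o.outStar v)
        ({e ∈ G.edgeFinset | o.head e = v}.image fun e ↦ o.outStar (o.tail e)) := by
    intro p hp
    obtain ⟨hp, e, he, hve⟩ := mem_filter.1 hp
    obtain ⟨e₀, -, rfl⟩ := mem_image.1 hp
    obtain ⟨heG, htail⟩ := o.mem_outStar.1 he
    rw [← htail]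
    rcases o.eq_head_or_eq_tail heG hve with rfl | rfl
    · exact mem_insert_of_mem (mem_image_of_mem _
        (mem_filter.2 ⟨SimpleGraph.mem_edgeFinset.2 heG, rfl⟩))
    · exact mem_insert_self _ _
  calc o.starDecomposition.storage v
    _ ≤ #({e ∈ G.edgeFinset | o.head e = v}.image fun e ↦ o.outStar (o.tail e)) + 1 :=
      (card_le_card hsub).trans (card_insert_le _ _)
    _ ≤ o.indeg v + 1 := by
      rw [o.indeg_eq_card]
      gcongr
      exact card_image_le

end FiniteEdgeSet

/-- The nontrivial direction of Hakimi's theorem on orientations with bounded indegrees. -/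
theorem exists_forall_indeg_le_of_card_le {k : ℕ}
    (hk : ∀ S : Finset (Sym2 V), ↑S ⊆ G.edgeSet → #S ≤ #(S.biUnion Sym2.toFinset) * k) :
    ∃ o : EdgeOrientation G, ∀ v, o.indeg v ≤ k := by
  obtain ⟨slot, hinj, hmem⟩ := exists_injective_endpoint_slot hk
  let o : EdgeOrientation G :=
    { head := fun e ↦ if he : e ∈ G.edgeSet then (slot ⟨e, he⟩).1 else e.out.1
      head_mem := fun e he ↦ by simpa only [dif_pos he] using hmem ⟨e, he⟩ }
  have hhead (e : G.edgeSet) : o.head e = (slot e).1 := dif_pos e.2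
  refine ⟨o, fun v ↦ ?_⟩
  have hin : {e | e ∈ G.edgeSet ∧ o.head e = v} =
      Subtype.val '' {e : G.edgeSet | (slot e).1 = v} := by
    ext e
    constructor
    · rintro ⟨he, hv⟩
      exact ⟨⟨e, he⟩, (hhead ⟨e, he⟩).symm.trans hv, rfl⟩
    · rintro ⟨e, hv, rfl⟩
      exact ⟨e.2, (hhead e).trans hv⟩
  calc o.indeg v
    _ = {e : G.edgeSet | (slot e).1 = v}.ncard := by
      rw [indeg, hin, Set.ncard_image_of_injective _ Subtype.val_injective]
    _ ≤ (({v} ×ˢ univ : Finset (V × Fin k)) : Set (V × Fin k)).ncard :=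
      Set.ncard_le_ncard_of_injOn slot
        (fun e he ↦ mem_coe.2 (mem_product.2 ⟨mem_singleton.2 he, mem_univ _⟩)) hinj.injOn
    _ = k := by
      rw [Set.ncard_coe_finset, card_product, card_singleton, card_fin, one_mul]

theorem exists_forall_indeg_le_MMI [Finite G.edgeSet] :
    ∃ o : EdgeOrientation G, ∀ v, o.indeg v ≤ MMI G := by
  let o : EdgeOrientation G := ⟨fun e ↦ e.out.1, fun e _ ↦ e.out_fst_mem⟩
  exact Nat.sInf_mem (s := {k | ∃ o : EdgeOrientation G, ∀ v, o.indeg v ≤ k})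
    ⟨G.edgeSet.ncard, o, fun _ ↦ Set.ncard_le_ncard fun _ he ↦ he.1⟩

end EdgeOrientation

theorem card_le_card_biUnion_toFinset_mul_of_forall_degree_le [G.LocallyFinite] {k : ℕ}
    (hdeg : ∀ v, G.degree v ≤ 2 * k) {S : Finset (Sym2 V)} (hS : ↑S ⊆ G.edgeSet) :
    #S ≤ #(S.biUnion Sym2.toFinset) * k := by
  have hincidences : #S * 2 ≤ #(S.biUnion Sym2.toFinset) * (2 * k) := by
    refine card_mul_le_card_mul (fun e v ↦ v ∈ e) (fun e he ↦ ?_) (fun v _ ↦ ?_)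
    · rw [← Sym2.card_toFinset_of_not_isDiag e (G.not_isDiag_of_mem_edgeSet (hS he))]
      refine card_le_card fun v hv ↦ mem_filter.2 ⟨mem_biUnion.2 ⟨e, he, hv⟩, ?_⟩
      exact Sym2.mem_toFinset.1 hv
    · refine le_trans ?_ (hdeg v)
      rw [← G.card_incidenceFinset_eq_degree]
      refine card_le_card fun e he ↦ ?_
      obtain ⟨heS, hve⟩ := mem_filter.1 he
      exact (G.mem_incidenceFinset v e).2 ⟨hS heS, hve⟩
  linarith

theorem MMI_le_of_forall_degree_le [G.LocallyFinite] {k : ℕ} (hdeg : ∀ v, G.degree v ≤ 2 * k) :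
    MMI G ≤ k :=
  Nat.sInf_le <| EdgeOrientation.exists_forall_indeg_le_of_card_le fun _ ↦
    card_le_card_biUnion_toFinset_mul_of_forall_degree_le hdeg

theorem exists_forall_storage_le_MMI_add_one [Finite G.edgeSet] :
    ∃ D : StarDecomposition G, ∀ v, D.storage v ≤ MMI G + 1 := by
  cases nonempty_fintype G.edgeSet
  obtain ⟨o, ho⟩ := EdgeOrientation.exists_forall_indeg_le_MMI (G := G)
  exact ⟨o.starDecomposition, fun v ↦
    (o.storage_starDecomposition_le v).trans (Nat.succ_le_succ (ho v))⟩

theorem SmaxStar_le_MMI_add_one [Finite G.edgeSet] : SmaxStar G ≤ MMI G + 1 :=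
  Nat.sInf_le exists_forall_storage_le_MMI_add_one

theorem exists_forall_storage_le_SmaxStar [Finite G.edgeSet] :
    ∃ D : StarDecomposition G, ∀ v, D.storage v ≤ SmaxStar G :=
  Nat.sInf_mem (s := {k | ∃ D : StarDecomposition G, ∀ v, D.storage v ≤ k})
    ⟨_, exists_forall_storage_le_MMI_add_one⟩

theorem card_edgeFinset_lt_card_mul_SmaxStar [Fintype V] [Fintype G.edgeSet]
    (hG : G.edgeSet.Nonempty) : #G.edgeFinset < Fintype.card V * SmaxStar G := by
  obtain ⟨D, hD⟩ := exists_forall_storage_le_SmaxStar (G := G)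
  have hstars : 0 < #D.stars := by
    obtain ⟨e, he⟩ := hG
    obtain ⟨p, hp, -⟩ := D.covers e he
    exact card_pos.2 ⟨p, hp⟩
  calc #G.edgeFinset
    _ < #G.edgeFinset + #D.stars := Nat.lt_add_of_pos_right hstars
    _ = D.totalStorage := D.totalStorage_eq.symm
    _ ≤ Fintype.card V * SmaxStar G := sum_le_card_nsmul _ _ _ fun v _ ↦ hD v

end

/-- If `G` is regular of even degree `d > 0`, then
`S_max*(G) = (d+2)/2`. -/
theorem SmaxStar_regular_even {V : Type*} [Fintype V] [Nonempty V] (G : SimpleGraph V)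
    [DecidableRel G.Adj] (d : ℕ) (hd : Even d) (hpos : 0 < d)
    (hreg : G.IsRegularOfDegree d) :
    SmaxStar G = (d + 2) / 2 := by
  obtain ⟨k, rfl⟩ := hd
  have hedges : G.edgeFinset.card = Fintype.card V * k := by
    have hsum := G.sum_degrees_eq_twice_card_edges
    simp only [hreg.degree_eq, Finset.sum_const, Finset.card_univ, smul_eq_mul] at hsum
    linarith
  have hnonempty : G.edgeSet.Nonempty := by
    rw [← SimpleGraph.coe_edgeFinset, Finset.coe_nonempty, ← Finset.card_pos, hedges]
    exact Nat.mul_pos Fintype.card_pos (by omega)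
  have hlower : k < SmaxStar G :=
    Nat.lt_of_mul_lt_mul_left (hedges ▸ card_edgeFinset_lt_card_mul_SmaxStar hnonempty)
  have hupper : SmaxStar G ≤ k + 1 :=
    SmaxStar_le_MMI_add_one.trans
      (Nat.succ_le_succ (MMI_le_of_forall_degree_le fun v ↦ (hreg.degree_eq v).le.trans (by omega)))
  omega
end

section
/- For every finite simple graph G on at least one vertex, MMO(G) ≤ S_max*(G) ≤ MMO(G) + 1, where MMO(G) is the minimum over all orientations of G of the maximum outdegree of a vertex, and S_max*(G) is the minimum over all edge-decompositions of G into stars of the maximum storage of a vertex. -/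
open Classical

/-!
Stars and orientations correspond by directing every edge towards the centre of its star. A star
in which `v` is a leaf has exactly one edge at `v`, and that edge leaves `v`; so the outdegree of
`v` is the number of stars in which `v` is a leaf, and the storage of `v` exceeds it by the number
of stars centred at `v`. Grouping the edges of an orientation by their head makes this excess at
most one.
-/

namespace StarDecomposition

variable {V : Type*} {G : SimpleGraph V} (D : StarDecomposition G)

/-- The orientation `o` directs every edge of `G` towards the centre of its star in `D`. This is
the relation that translates between star decompositions and orientations. -/
def HeadsAtCentres (o : EdgeOrientation G) : Prop :=
  ∀ p ∈ D.stars, ∀ e ∈ p.2, o.head e = p.1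

variable {D} in
theorem star_eq_of_mem {p q : V × Finset (Sym2 V)} (hp : p ∈ D.stars) (hq : q ∈ D.stars)
    {e : Sym2 V} (hpe : e ∈ p.2) (hqe : e ∈ q.2) : p = q := by
  by_contra hpq
  exact Finset.disjoint_left.1 (D.disj p hp q hq hpq) hpe hqe

variable {D} in
theorem eq_mk_centre {p : V × Finset (Sym2 V)} (hp : p ∈ D.stars) {e : Sym2 V} (he : e ∈ p.2)
    {v : V} (hv : v ∈ e) (hvp : v ≠ p.1) : e = s(p.1, v) :=
  (Sym2.mem_and_mem_iff hvp.symm).1 ⟨D.centre_mem p hp e he, hv⟩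

variable {D} in
theorem mk_centre_mem_of_leaf {p : V × Finset (Sym2 V)} (hp : p ∈ D.stars) {v : V}
    (hvp : v ≠ p.1) (hv : ∃ e ∈ p.2, v ∈ e) : s(p.1, v) ∈ p.2 := by
  obtain ⟨e, he, hve⟩ := hv
  exact eq_mk_centre hp he hve hvp ▸ he

theorem storage_eq_leafCount_add_card_centred (v : V) :
    D.storage v = D.leafCount v + (D.stars.filter fun p => p.1 = v).card := by
  have centre_mem_star : ∀ p ∈ D.stars, p.1 = v → ∃ e ∈ p.2, v ∈ e := by
    rintro p hp rfl
    obtain ⟨e, he⟩ := D.star_nonempty p hp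
    exact ⟨e, he, D.centre_mem p hp e he⟩
  rw [storage, leafCount, ← Finset.card_union_of_disjoint, ← Finset.filter_or]
  · congr 1
    refine Finset.filter_congr fun p hp => ?_
    grind
  · exact Finset.disjoint_filter.2 fun p _ hleaf hcentre => hleaf.1 hcentre.symm

theorem leafCount_le_storage (v : V) : D.leafCount v ≤ D.storage v :=
  D.storage_eq_leafCount_add_card_centred v ▸ Nat.le_add_right _ _

theorem storage_le_card_stars (v : V) : D.storage v ≤ D.stars.card :=
  Finset.card_filter_le _ _

theorem exists_headsAtCentres : ∃ o : EdgeOrientation G, D.HeadsAtCentres o := by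
  choose star star_mem mem_star using D.covers
  refine ⟨⟨fun e => if he : e ∈ G.edgeSet then (star e he).1 else e.out.1, fun e he => ?_⟩,
    fun p hp e hep => ?_⟩
  · simpa only [dif_pos he] using D.centre_mem _ (star_mem e he) e (mem_star e he)
  · have he : e ∈ G.edgeSet := D.edges_sub p hp e hep
    simp only [dif_pos he, star_eq_of_mem (star_mem e he) hp (mem_star e he) hep]

variable {D} in
theorem HeadsAtCentres.outdeg_eq_leafCount {o : EdgeOrientation G} (ho : D.HeadsAtCentres o)
    (v : V) : o.outdeg v = D.leafCount v := by
  have outEdges_eq : {e | e ∈ G.edgeSet ∧ v ∈ e ∧ o.head e ≠ v} =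
      (fun p => s(p.1, v)) '' {p | p ∈ D.stars ∧ v ≠ p.1 ∧ ∃ e ∈ p.2, v ∈ e} := by
    ext e
    constructor
    · rintro ⟨he, hve, hhead⟩
      obtain ⟨p, hp, hep⟩ := D.covers e he
      have hvp : v ≠ p.1 := ho p hp e hep ▸ hhead.symm
      exact ⟨p, ⟨hp, hvp, e, hep, hve⟩, (eq_mk_centre hp hep hve hvp).symm⟩
    · rintro ⟨p, ⟨hp, hvp, hv⟩, rfl⟩
      have hmem := mk_centre_mem_of_leaf hp hvp hv
      exact ⟨D.edges_sub p hp _ hmem, Sym2.mem_mk_right _ _, ho p hp _ hmem ▸ hvp.symm⟩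
  have injOn : Set.InjOn (fun p : V × Finset (Sym2 V) => s(p.1, v))
      {p | p ∈ D.stars ∧ v ≠ p.1 ∧ ∃ e ∈ p.2, v ∈ e} := by
    rintro p ⟨hp, hvp, hv⟩ q ⟨hq, hvq, hv'⟩ (hpq : s(p.1, v) = s(q.1, v))
    exact star_eq_of_mem hp hq (mk_centre_mem_of_leaf hp hvp hv)
      (hpq ▸ mk_centre_mem_of_leaf hq hvq hv')
  rw [EdgeOrientation.outdeg, outEdges_eq, injOn.ncard_image, leafCount, ← Set.ncard_coe_finset,
    Finset.coe_filter]

end StarDecomposition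

namespace EdgeOrientation

variable {V : Type*} {G : SimpleGraph V} (o : EdgeOrientation G)

theorem outdeg_le_ncard_edgeSet (hG : G.edgeSet.Finite) (v : V) :
    o.outdeg v ≤ G.edgeSet.ncard :=
  Set.ncard_le_ncard (fun _ he => he.1) hG

/-- The star, centred at `v`, of all edges with head `v`, encoded as in `StarDecomposition.stars`.
Its edge set is empty if no edge has head `v`. -/
noncomputable def inStar (hG : G.edgeSet.Finite) (v : V) : V × Finset (Sym2 V) :=
  (v, hG.toFinset.filter fun e => o.head e = v)

variable {o} in
theorem mem_inStar {hG : G.edgeSet.Finite} {v : V} {e : Sym2 V} :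
    e ∈ (o.inStar hG v).2 ↔ e ∈ G.edgeSet ∧ o.head e = v := by
  rw [inStar, Finset.mem_filter, Set.Finite.mem_toFinset]

/-- The star decomposition of `G` that groups the edges by their head. Only heads of edges are
taken as centres, so that all stars are nonempty. -/
noncomputable def toStarDecomposition (hG : G.edgeSet.Finite) : StarDecomposition G where
  stars := hG.toFinset.image fun e => o.inStar hG (o.head e)
  star_nonempty := by
    simp only [Finset.forall_mem_image, Set.Finite.mem_toFinset]
    exact fun e he => ⟨e, mem_inStar.2 ⟨he, rfl⟩⟩
  centre_mem := by
    simp only [Finset.forall_mem_image, mem_inStar]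
    rintro f - e ⟨he, hhead⟩
    exact hhead ▸ o.head_mem e he
  edges_sub := by
    simp only [Finset.forall_mem_image, mem_inStar]
    exact fun _ _ _ he => he.1
  disj := by
    simp only [Finset.forall_mem_image]
    intro f _ g _ hfg
    refine Finset.disjoint_left.2 fun e hef heg => hfg ?_
    rw [← (mem_inStar.1 hef).2, ← (mem_inStar.1 heg).2]
  covers e he :=
    ⟨_, Finset.mem_image_of_mem _ (hG.mem_toFinset.2 he), mem_inStar.2 ⟨he, rfl⟩⟩

theorem eq_inStar_of_mem_stars {hG : G.edgeSet.Finite} {p : V × Finset (Sym2 V)}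
    (hp : p ∈ (o.toStarDecomposition hG).stars) : p = o.inStar hG p.1 := by
  obtain ⟨e, -, rfl⟩ := Finset.mem_image.1 hp
  rfl

theorem headsAtCentres_toStarDecomposition (hG : G.edgeSet.Finite) :
    (o.toStarDecomposition hG).HeadsAtCentres o := by
  intro p hp e he
  rw [o.eq_inStar_of_mem_stars hp] at he
  exact (mem_inStar.1 he).2

theorem card_centred_toStarDecomposition_le_one (hG : G.edgeSet.Finite) (v : V) :
    ((o.toStarDecomposition hG).stars.filter fun p => p.1 = v).card ≤ 1 := by
  refine Finset.card_le_one.2 fun p hp q hq => ?_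
  obtain ⟨hp, hpv⟩ := Finset.mem_filter.1 hp
  obtain ⟨hq, hqv⟩ := Finset.mem_filter.1 hq
  rw [o.eq_inStar_of_mem_stars hp, o.eq_inStar_of_mem_stars hq, hpv, hqv]

theorem storage_toStarDecomposition_le (hG : G.edgeSet.Finite) (v : V) :
    (o.toStarDecomposition hG).storage v ≤ o.outdeg v + 1 := by
  rw [StarDecomposition.storage_eq_leafCount_add_card_centred,
    (o.headsAtCentres_toStarDecomposition hG).outdeg_eq_leafCount]
  exact Nat.add_le_add_left (o.card_centred_toStarDecomposition_le_one hG v) _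

end EdgeOrientation

section Extremal

variable {V : Type*} {G : SimpleGraph V}

theorem exists_outdeg_le_MMO (hG : G.edgeSet.Finite) :
    ∃ o : EdgeOrientation G, ∀ v, o.outdeg v ≤ MMO G := by
  let o : EdgeOrientation G := ⟨fun e => e.out.1, fun e _ => e.out_fst_mem⟩
  exact Nat.sInf_mem (s := {k | ∃ o : EdgeOrientation G, ∀ v, o.outdeg v ≤ k})
    ⟨_, o, o.outdeg_le_ncard_edgeSet hG⟩

theorem exists_storage_le_SmaxStar (hG : Nonempty (StarDecomposition G)) :
    ∃ D : StarDecomposition G, ∀ v, D.storage v ≤ SmaxStar G := by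
  obtain ⟨D⟩ := hG
  exact Nat.sInf_mem (s := {k | ∃ D : StarDecomposition G, ∀ v, D.storage v ≤ k})
    ⟨_, D, D.storage_le_card_stars⟩

end Extremal

theorem MMO_le_SmaxStar_le_general {V : Type*} (G : SimpleGraph V) (hG : G.edgeSet.Finite) :
    MMO G ≤ SmaxStar G ∧ SmaxStar G ≤ MMO G + 1 := by
  obtain ⟨o, ho⟩ := exists_outdeg_le_MMO hG
  obtain ⟨D, hD⟩ := exists_storage_le_SmaxStar ⟨o.toStarDecomposition hG⟩
  obtain ⟨oD, hoD⟩ := D.exists_headsAtCentres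
  constructor
  · refine Nat.sInf_le ⟨oD, fun v => ?_⟩
    calc oD.outdeg v = D.leafCount v := hoD.outdeg_eq_leafCount v
      _ ≤ D.storage v := D.leafCount_le_storage v
      _ ≤ SmaxStar G := hD v
  · refine Nat.sInf_le ⟨o.toStarDecomposition hG, fun v => ?_⟩
    calc (o.toStarDecomposition hG).storage v ≤ o.outdeg v + 1 :=
          o.storage_toStarDecomposition_le hG v
      _ ≤ MMO G + 1 := Nat.add_le_add_right (ho v) 1

/-- For every finite simple graph `G` on at least one vertex,
`MMO(G) ≤ S_max*(G) ≤ MMO(G) + 1`. -/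
theorem MMO_le_SmaxStar_le {V : Type*} [Fintype V] [Nonempty V] (G : SimpleGraph V) :
    MMO G ≤ SmaxStar G ∧ SmaxStar G ≤ MMO G + 1 :=
  MMO_le_SmaxStar_le_general G G.edgeSet.toFinite
end
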